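/- Let Ω be a bounded domain and suppose grid functions satisfy the discrete Sobolev inequalities ‖∇_h f‖₄ ≤ C₀‖Δ_h f‖₂ and ‖f‖_∞ ≤ C₀(‖f‖₂ + ‖Δ_h f‖₂). Then for any two periodic grid functions f, g, the product rule estimate holds: ‖Δ_h(fg)‖₂ ≤ (√3 + 2)C₀²(‖f‖₂ + ‖Δ_h f‖₂)(‖g‖₂ + ‖Δ_h g‖₂). -/

import Mathlib

/-- A uniform periodic grid of the unit cube with `N` points in each direction. -/
abbrev Grid (N : ℕ) := ZMod N × ZMod N × ZMod N

/-- Forward difference in the `x` direction (mesh size `h = 1/N`). -/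
noncomputable def Dx {N : ℕ} (f : Grid N → ℝ) : Grid N → ℝ :=
  fun p => (N : ℝ) * (f (p.1 + 1, p.2) - f p)

/-- Forward difference in the `y` direction. -/
noncomputable def Dy {N : ℕ} (f : Grid N → ℝ) : Grid N → ℝ :=
  fun p => (N : ℝ) * (f (p.1, p.2.1 + 1, p.2.2) - f p)

/-- Forward difference in the `z` direction. -/
noncomputable def Dz {N : ℕ} (f : Grid N → ℝ) : Grid N → ℝ :=
  fun p => (N : ℝ) * (f (p.1, p.2.1, p.2.2 + 1) - f p)

/-- Centered second difference in the `x` direction. -/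
noncomputable def Dx2 {N : ℕ} (f : Grid N → ℝ) : Grid N → ℝ :=
  fun p => (N : ℝ) ^ 2 * (f (p.1 + 1, p.2) - 2 * f p + f (p.1 - 1, p.2))

/-- Centered second difference in the `y` direction. -/
noncomputable def Dy2 {N : ℕ} (f : Grid N → ℝ) : Grid N → ℝ :=
  fun p => (N : ℝ) ^ 2 * (f (p.1, p.2.1 + 1, p.2.2) - 2 * f p + f (p.1, p.2.1 - 1, p.2.2))

/-- Centered second difference in the `z` direction. -/
noncomputable def Dz2 {N : ℕ} (f : Grid N → ℝ) : Grid N → ℝ :=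
  fun p => (N : ℝ) ^ 2 * (f (p.1, p.2.1, p.2.2 + 1) - 2 * f p + f (p.1, p.2.1, p.2.2 - 1))

/-- The standard discrete Laplacian `Δ_h = D_x² + D_y² + D_z²`. -/
noncomputable def lap {N : ℕ} (f : Grid N → ℝ) : Grid N → ℝ :=
  fun p => Dx2 f p + Dy2 f p + Dz2 f p

/-- Discrete `ℓ²` norm: `‖f‖₂ = (h³ ∑ |f|²)^{1/2}` with `h³ = 1/N³`. -/
noncomputable def norm2 {N : ℕ} [NeZero N] (f : Grid N → ℝ) : ℝ :=
  Real.sqrt ((1 / (N : ℝ) ^ 3) * ∑ p : Grid N, (f p) ^ 2)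

/-- Discrete maximum norm. -/
noncomputable def normInf {N : ℕ} [NeZero N] (f : Grid N → ℝ) : ℝ :=
  ⨆ p : Grid N, |f p|

/-- Discrete `ℓ⁴` norm of the gradient: `(‖D_x f‖₄⁴ + ‖D_y f‖₄⁴ + ‖D_z f‖₄⁴)^{1/4}`. -/
noncomputable def gradNorm4 {N : ℕ} [NeZero N] (f : Grid N → ℝ) : ℝ :=
  ((1 / (N : ℝ) ^ 3) *
      ∑ p : Grid N, ((Dx f p) ^ 4 + (Dy f p) ^ 4 + (Dz f p) ^ 4)) ^ ((1 : ℝ) / 4)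

/-- Oscillation on the cycle is at most half the total variation. -/
lemma osc_aux {N : ℕ} [NeZero N] (v : ZMod N → ℝ) (s t : ZMod N) :
    v t - v s ≤ (1/2) * ∑ k, |v (k+1) - v k| := by
  obtain ⟨n, hn, rfl⟩ : ∃ n : ℕ, n < N ∧ t = s + n :=
    ⟨(t - s).val, ZMod.val_lt _, by simp⟩
  have h0 : ∀ m : ℕ, ∑ j ∈ Finset.range m, (v (s + (j:ℕ) + 1) - v (s + (j:ℕ))) = v (s + m) - v s := by
    intro m
    induction m with
    | zero => simp
    | succ m ih => rw [Finset.sum_range_succ, ih]; push_cast; rw [← add_assoc]; ring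
  have hTV : ∑ k, |v (k+1) - v k| = ∑ j ∈ Finset.range N, |v (s + (j:ℕ) + 1) - v (s + (j:ℕ))| := by
    symm
    apply Finset.sum_bij (fun (j : ℕ) _ => s + (j : ZMod N))
    · intro a _; simp
    · intro a ha b hb hab
      have h1 : (a : ZMod N) = b := by simpa using hab
      have := congrArg ZMod.val h1
      rwa [ZMod.val_cast_of_lt (Finset.mem_range.mp ha),
        ZMod.val_cast_of_lt (Finset.mem_range.mp hb)] at this
    · intro b _
      exact ⟨(b - s).val, Finset.mem_range.mpr (ZMod.val_lt _), by simp⟩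
    · intro a _; rfl
  have e1 := h0 n
  have e2 := h0 N
  rw [← Finset.sum_range_add_sum_Ico _ hn.le] at e2 hTV
  have hN : v (s + (N:ZMod N)) = v s := by simp
  have b1 := (le_abs_self _).trans (Finset.abs_sum_le_sum_abs (fun j : ℕ => v (s + (j:ℕ) + 1) - v (s + (j:ℕ))) (Finset.range n))
  have b2 := (neg_le_abs _).trans (Finset.abs_sum_le_sum_abs (fun j : ℕ => v (s + (j:ℕ) + 1) - v (s + (j:ℕ))) (Finset.Ico n N))
  rw [hTV]
  linarith

lemma poinc_aux {N : ℕ} [NeZero N] (v : ZMod N → ℝ) (h : ∑ k, v k = 0) :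
    8 * ∑ k, v k ^ 2 ≤ (N:ℝ)^2 * ∑ k, (v (k+1) - v k)^2 := by
  have hN : (0:ℝ) < N := by exact_mod_cast Nat.pos_of_ne_zero (NeZero.ne N)
  set T := ∑ k, |v (k+1) - v k| with hT
  have hT2 : T^2 ≤ N * ∑ k, (v (k+1) - v k)^2 := by
    have := sq_sum_le_card_mul_sum_sq (s := Finset.univ) (f := fun k : ZMod N => |v (k+1) - v k|)
    simpa [ZMod.card] using this
  have h1 : ∀ s t, (v t - v s)^2 ≤ (1/4) * T^2 := by
    intro s t
    have a := osc_aux v s t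
    have b := osc_aux v t s
    rw [← hT] at a b
    nlinarith
  have h2 : ∑ s, ∑ t, (v t - v s)^2 = 2 * N * ∑ k, v k^2 := by
    have : ∀ s t, (v t - v s)^2 = v t^2 - 2 * v s * v t + v s^2 := by intros; ring
    simp only [this, Finset.sum_add_distrib, Finset.sum_sub_distrib, ← Finset.mul_sum, h]
    simp [ZMod.card, ← Finset.mul_sum]; ring
  have h3 : ∑ s : ZMod N, ∑ t : ZMod N, (v t - v s)^2 ≤ ∑ s : ZMod N, ∑ t : ZMod N, (1/4) * T^2 :=
    Finset.sum_le_sum fun s _ => Finset.sum_le_sum fun t _ => h1 s t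
  rw [h2] at h3
  simp [ZMod.card] at h3
  have h4 : 8 * ∑ k, v k^2 ≤ N * T^2 := by
    refine le_of_mul_le_mul_left ?_ hN
    nlinarith
  nlinarith [mul_le_mul_of_nonneg_left hT2 hN.le]

/-- The one-dimensional majorant of `v ^ 2`. -/
noncomputable def Maj {N : ℕ} [NeZero N] (v : ZMod N → ℝ) : ℝ :=
  (1/(N:ℝ)) * ∑ k, v k^2 + (1/2) * ∑ k, |v (k+1)^2 - v k^2|

lemma le_Maj {N : ℕ} [NeZero N] (v : ZMod N → ℝ) (k : ZMod N) : v k^2 ≤ Maj v := by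
  have hN : (0:ℝ) < N := by exact_mod_cast Nat.pos_of_ne_zero (NeZero.ne N)
  have h : ∑ s : ZMod N, (v k^2 - v s^2) ≤ ∑ s : ZMod N, (1/2) * ∑ k, |v (k+1)^2 - v k^2| :=
    Finset.sum_le_sum fun s _ => osc_aux (fun k => v k^2) s k
  simp only [Finset.sum_sub_distrib, Finset.sum_const, Finset.card_univ, ZMod.card, nsmul_eq_mul] at h
  unfold Maj
  refine le_of_mul_le_mul_left ?_ hN
  rw [mul_add, ← mul_assoc (N:ℝ) (1/(N:ℝ))]
  rw [mul_one_div_cancel hN.ne']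
  linarith

lemma Maj_nonneg {N : ℕ} [NeZero N] (v : ZMod N → ℝ) : 0 ≤ Maj v :=
  (sq_nonneg _).trans (le_Maj v 0)

lemma sum_shift {N : ℕ} [NeZero N] (F : ZMod N → ℝ) : ∑ k, F (k+1) = ∑ k, F k :=
  Equiv.sum_comp (Equiv.addRight (1 : ZMod N)) F

lemma sum_Maj {N : ℕ} [NeZero N] {ι : Type*} [Fintype ι] (v : ι → ZMod N → ℝ) :
    ∑ i, Maj (v i) ≤ (1/(N:ℝ)) * (∑ i, ∑ k, v i k^2)
      + √(∑ i, ∑ k, v i k^2) * √(∑ i, ∑ k, (v i (k+1) - v i k)^2) := by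
  unfold Maj
  rw [Finset.sum_add_distrib, ← Finset.mul_sum, ← Finset.mul_sum]
  refine add_le_add le_rfl ?_
  have h := Real.sum_mul_le_sqrt_mul_sqrt (Finset.univ : Finset (ι × ZMod N))
    (fun p => |v p.1 (p.2+1) + v p.1 p.2|) (fun p => |v p.1 (p.2+1) - v p.1 p.2|)
  simp only [sq_abs, Fintype.sum_prod_type, ← abs_mul] at h
  have e : ∀ i k, (v i (k+1) + v i k) * (v i (k+1) - v i k) = v i (k+1)^2 - v i k^2 := by
    intros; ring
  simp only [e] at h
  have h2 : ∑ i, ∑ k, (v i (k+1) + v i k)^2 ≤ 2^2 * ∑ i, ∑ k, v i k^2 := by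
    rw [Finset.mul_sum]
    refine Finset.sum_le_sum fun i _ => ?_
    have : ∑ k, (v i (k+1) + v i k)^2 ≤ ∑ k, (2 * v i (k+1)^2 + 2 * v i k^2) :=
      Finset.sum_le_sum fun k _ => by nlinarith [sq_nonneg (v i (k+1) - v i k)]
    rw [Finset.sum_add_distrib, ← Finset.mul_sum, ← Finset.mul_sum,
      sum_shift (fun k => v i k^2)] at this
    linarith
  have h3 := Real.sqrt_le_sqrt h2
  rw [Real.sqrt_mul (by norm_num), Real.sqrt_sq (by norm_num)] at h3
  have := mul_le_mul_of_nonneg_right h3 (Real.sqrt_nonneg (∑ i, ∑ k, (v i (k+1) - v i k)^2))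
  linarith

lemma cs_aux {ι : Type*} [Fintype ι] (a b : ι → ℝ) (ha : ∀ i, 0 ≤ a i) (hb : ∀ i, 0 ≤ b i) :
    ∑ i, √(a i) * √(b i) ≤ √(∑ i, a i) * √(∑ i, b i) := by
  have h := Real.sum_mul_le_sqrt_mul_sqrt (Finset.univ : Finset ι) (fun i => √(a i)) (fun i => √(b i))
  simpa [Real.sq_sqrt, ha, hb] using h

lemma L4_aux {N : ℕ} [NeZero N] (w : ZMod N → ZMod N → ZMod N → ℝ) (S P1 P2 P3 : ℝ)
    (hS : S = ∑ z, ∑ x, ∑ y, w x y z^2)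
    (h1 : P1 = ∑ z, ∑ x, ∑ y, (w (x+1) y z - w x y z)^2)
    (h2 : P2 = ∑ z, ∑ x, ∑ y, (w x (y+1) z - w x y z)^2)
    (h3 : P3 = ∑ z, ∑ x, ∑ y, (w x y (z+1) - w x y z)^2) :
    ∑ z, ∑ x, ∑ y, w x y z^4 ≤ √S * ((1/(N:ℝ)) * √S + √P1) * ((1/(N:ℝ)) * √S + √P2)
      * ((1/(N:ℝ)) * √S + √P3) := by
  set μ : ℝ := 1/(N:ℝ) with hμ
  have hμ0 : 0 ≤ μ := by positivity
  set q : ZMod N → ℝ := fun z => ∑ x, ∑ y, w x y z^2 with hq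
  set p1 : ZMod N → ℝ := fun z => ∑ x, ∑ y, (w (x+1) y z - w x y z)^2 with hp1
  set p2 : ZMod N → ℝ := fun z => ∑ x, ∑ y, (w x (y+1) z - w x y z)^2 with hp2
  have q0 : ∀ z, 0 ≤ q z := fun z => by positivity
  have p10 : ∀ z, 0 ≤ p1 z := fun z => by positivity
  have p20 : ∀ z, 0 ≤ p2 z := fun z => by positivity
  have S0 : 0 ≤ S := by rw [hS]; positivity
  have m1 : ∀ z, ∑ y, Maj (fun x => w x y z) ≤ μ * q z + √(q z) * √(p1 z) := by
    intro z
    have := sum_Maj (fun y x => w x y z)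
    rw [Finset.sum_comm (f := fun y x => w x y z ^2),
      Finset.sum_comm (f := fun y x => (w (x+1) y z - w x y z)^2)] at this
    exact this
  have m2 : ∀ z, ∑ x, Maj (fun y => w x y z) ≤ μ * q z + √(q z) * √(p2 z) := by
    intro z
    exact sum_Maj (fun x y => w x y z)
  have tri : ∀ F : ZMod N → ZMod N → ZMod N → ℝ,
      ∑ i : ZMod N × ZMod N, ∑ z, F i.1 i.2 z = ∑ z, ∑ x, ∑ y, F x y z := by
    intro F
    rw [Finset.sum_comm]
    simp only [Fintype.sum_prod_type]
  have m3 : ∀ z, q z ≤ √S * (μ * √S + √P3) := by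
    intro z
    have a := sum_Maj (fun (i : ZMod N × ZMod N) z => w i.1 i.2 z)
    rw [tri (fun x y z => w x y z^2), tri (fun x y z => (w x y (z+1) - w x y z)^2), ← hS, ← h3] at a
    have b : q z ≤ ∑ i : ZMod N × ZMod N, Maj (fun z => w i.1 i.2 z) := by
      simp only [hq, Fintype.sum_prod_type]
      exact Finset.sum_le_sum fun x _ => Finset.sum_le_sum fun y _ => le_Maj (fun z => w x y z) z
    calc q z ≤ _ := b
      _ ≤ _ := a
      _ = √S * (μ * √S + √P3) := by
        nth_rewrite 1 [← Real.mul_self_sqrt S0]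
        ring
  have hz : ∀ z, ∑ x, ∑ y, w x y z^4 ≤
      q z * ((μ * √(q z) + √(p1 z)) * (μ * √(q z) + √(p2 z))) := by
    intro z
    calc ∑ x, ∑ y, w x y z^4
        ≤ ∑ x, ∑ y, Maj (fun y => w x y z) * Maj (fun x => w x y z) := by
          refine Finset.sum_le_sum fun x _ => Finset.sum_le_sum fun y _ => ?_
          have a := le_Maj (fun y => w x y z) y
          have b := le_Maj (fun x => w x y z) x
          calc w x y z^4 = w x y z^2 * w x y z^2 := by ring
            _ ≤ _ := mul_le_mul a b (sq_nonneg _) (Maj_nonneg _)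
      _ = (∑ x, Maj (fun y => w x y z)) * ∑ y, Maj (fun x => w x y z) := by
          rw [Finset.sum_mul_sum]
      _ ≤ (μ * q z + √(q z) * √(p2 z)) * (μ * q z + √(q z) * √(p1 z)) :=
          mul_le_mul (m2 z) (m1 z) (Finset.sum_nonneg fun _ _ => Maj_nonneg _)
            (by have := q0 z; positivity)
      _ = _ := by
          have := Real.mul_self_sqrt (q0 z)
          set r := √(q z)
          rw [← this]; ring
  have hsum : ∑ z, (μ * √(q z) + √(p1 z)) * (μ * √(q z) + √(p2 z)) ≤
      (μ * √S + √P1) * (μ * √S + √P2) := by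
    have e : ∀ z, (μ * √(q z) + √(p1 z)) * (μ * √(q z) + √(p2 z)) =
        μ^2 * q z + μ * (√(q z) * √(p2 z)) + μ * (√(q z) * √(p1 z)) + √(p1 z) * √(p2 z) := by
      intro z
      have := Real.mul_self_sqrt (q0 z)
      set r := √(q z)
      rw [← this]; ring
    simp only [e, Finset.sum_add_distrib, ← Finset.mul_sum]
    have c1 := cs_aux q p2 q0 p20
    have c2 := cs_aux q p1 q0 p10
    have c3 := cs_aux p1 p2 p10 p20
    have d1 := mul_le_mul_of_nonneg_left c1 hμ0
    have d2 := mul_le_mul_of_nonneg_left c2 hμ0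
    rw [← hS, ← h2] at d1
    rw [← hS, ← h1] at d2
    rw [← h1, ← h2] at c3
    have : ∑ z, q z = √S * √S := by rw [Real.mul_self_sqrt S0, hS]
    rw [this]
    linarith
  calc ∑ z, ∑ x, ∑ y, w x y z^4
      ≤ ∑ z, (√S * (μ * √S + √P3)) * ((μ * √(q z) + √(p1 z)) * (μ * √(q z) + √(p2 z))) := by
        refine Finset.sum_le_sum fun z _ => (hz z).trans ?_
        exact mul_le_mul_of_nonneg_right (m3 z) (by positivity)
    _ = (√S * (μ * √S + √P3)) * ∑ z, ((μ * √(q z) + √(p1 z)) * (μ * √(q z) + √(p2 z))) := by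
        rw [Finset.mul_sum]
    _ ≤ (√S * (μ * √S + √P3)) * ((μ * √S + √P1) * (μ * √S + √P2)) :=
        mul_le_mul_of_nonneg_left hsum (by positivity)
    _ = _ := by ring

lemma alg_aux (t x y z : ℝ) (ht : 0 ≤ t) (hx : 0 ≤ x) (hy : 0 ≤ y) (hz : 0 ≤ z)
    (h : 8 * t^2 ≤ x^2) :
    t * (t + x) * (t + y) * (t + z) ≤ (1/4) * (x^2+y^2+z^2)^2 := by
  have h1 : t ≤ 0.36 * x := by nlinarith
  have h2 : t * (t + x) ≤ 0.5 * x^2 := by nlinarith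
  have h3 : (t + y) * (t + z) ≤ 0.375 * x^2 + 0.75 * (y^2+z^2) := by
    nlinarith [sq_nonneg (y - z), sq_nonneg (2*t - y), sq_nonneg (2*t - z)]
  calc t * (t + x) * (t + y) * (t + z) = (t * (t + x)) * ((t + y) * (t + z)) := by ring
    _ ≤ (0.5 * x^2) * (0.375 * x^2 + 0.75 * (y^2+z^2)) :=
      mul_le_mul h2 h3 (by positivity) (by positivity)
    _ ≤ _ := by nlinarith [sq_nonneg (y^2+z^2), sq_nonneg (x^2), mul_nonneg (sq_nonneg x) (add_nonneg (sq_nonneg y) (sq_nonneg z))]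

lemma shift_sub {G : Type*} [AddCommGroup G] [Fintype G] (V W : G → ℝ) (a : G) :
    ∑ p, (V p - V (p - a)) * W p = ∑ p, V p * (W p - W (p + a)) := by
  have h : ∑ p, V (p - a) * W p = ∑ p, V p * W (p + a) := by
    rw [← Equiv.sum_comp (Equiv.addRight a) (fun p => V (p - a) * W p)]
    simp
  simp only [sub_mul, mul_sub, Finset.sum_sub_distrib, h]

lemma parts_aux {G : Type*} [AddCommGroup G] [Fintype G] (f : G → ℝ) (a b : G) :
    ∑ p, (f (p+a) - 2 * f p + f (p-a)) * (f (p+b) - 2 * f p + f (p-b)) =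
      ∑ p, ((f (p+b+a) - f (p+b)) - (f (p+a) - f p))^2 := by
  have h1 := shift_sub (fun p => f (p+a) - f p) (fun p => f (p+b) - 2 * f p + f (p-b)) a
  have h2 := shift_sub (fun p => (f (p+b+a) - f (p+b)) - (f (p+a) - f p)) (fun p => f (p+a) - f p) b
  simp only [sub_add_cancel] at h1 h2
  calc _ = ∑ p, (f (p+a) - f p - (f p - f (p-a))) * (f (p+b) - 2 * f p + f (p-b)) :=
        Finset.sum_congr rfl fun p _ => by ring
    _ = _ := h1
    _ = - ∑ p, ((f (p+b+a) - f (p+b)) - (f (p+a) - f p) - ((f (p+a) - f p) - (f (p-b+a) - f (p-b))))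
          * (f (p+a) - f p) := by
        rw [← Finset.sum_neg_distrib]
        refine Finset.sum_congr rfl fun p _ => ?_
        rw [add_right_comm p b a, sub_add_eq_add_sub p b a]
        ring
    _ = _ := by
        rw [h2, ← Finset.sum_neg_distrib]
        refine Finset.sum_congr rfl fun p _ => ?_
        ring

lemma grid_sum {N : ℕ} [NeZero N] (F : Grid N → ℝ) :
    ∑ p, F p = ∑ z, ∑ x, ∑ y, F (x, y, z) := by
  rw [Fintype.sum_prod_type]
  simp only [Fintype.sum_prod_type]
  conv_rhs => rw [Finset.sum_comm]
  exact Finset.sum_congr rfl fun x _ => Finset.sum_comm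

/-- Squared norm of an undivided difference. -/
noncomputable def Pd {N : ℕ} [NeZero N] (e : Grid N) (u : Grid N → ℝ) : ℝ :=
  ∑ p, (u (p + e) - u p)^2

abbrev ex {N : ℕ} : Grid N := (1, 0, 0)
abbrev ey {N : ℕ} : Grid N := (0, 1, 0)
abbrev ez {N : ℕ} : Grid N := (0, 0, 1)

lemma L4_grid {N : ℕ} [NeZero N] (u : Grid N → ℝ) :
    ∑ p, u p^4 ≤ √(∑ p, u p^2) * ((1/(N:ℝ)) * √(∑ p, u p^2) + √(Pd ex u))
      * ((1/(N:ℝ)) * √(∑ p, u p^2) + √(Pd ey u)) * ((1/(N:ℝ)) * √(∑ p, u p^2) + √(Pd ez u)) := by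
  have h := L4_aux (fun x y z => u (x,y,z)) (∑ p, u p^2) (Pd ex u) (Pd ey u) (Pd ez u)
    (grid_sum _) (by simp [Pd, grid_sum, ex]) (by simp [Pd, grid_sum, ey])
    (by simp [Pd, grid_sum, ez])
  rwa [grid_sum (fun p => u p^4)]

lemma L4_bound {N : ℕ} [NeZero N] (S M P1 P2 P3 : ℝ) (h1 : 0 ≤ P1) (h2 : 0 ≤ P2) (h3 : 0 ≤ P3)
    (hS : 0 ≤ S) (hP : 8 * S ≤ (N:ℝ)^2 * P1)
    (hM : M ≤ √S * ((1/(N:ℝ)) * √S + √P1) * ((1/(N:ℝ)) * √S + √P2) * ((1/(N:ℝ)) * √S + √P3)) :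
    M ≤ N / 4 * (P1 + P2 + P3)^2 := by
  have hN : (0:ℝ) < N := by exact_mod_cast Nat.pos_of_ne_zero (NeZero.ne N)
  have h8 : 8 * ((1/(N:ℝ)) * √S)^2 ≤ (√P1)^2 := by
    rw [mul_pow, Real.sq_sqrt hS, Real.sq_sqrt h1]
    rw [div_pow, one_pow, one_div, ← mul_assoc, mul_comm (8:ℝ), mul_assoc,
      inv_mul_le_iff₀ (by positivity)]
    exact hP
  have := alg_aux ((1/(N:ℝ)) * √S) (√P1) (√P2) (√P3) (by positivity) (by positivity)
    (by positivity) (by positivity) h8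
  rw [Real.sq_sqrt h1, Real.sq_sqrt h2, Real.sq_sqrt h3] at this
  calc M ≤ _ := hM
    _ = N * ((1/(N:ℝ)) * √S * ((1/(N:ℝ)) * √S + √P1) * ((1/(N:ℝ)) * √S + √P2)
        * ((1/(N:ℝ)) * √S + √P3)) := by
        have : √S = N * ((1/(N:ℝ)) * √S) := by field_simp
        nth_rewrite 1 [this]
        ring
    _ ≤ N * (1/4 * (P1+P2+P3)^2) := mul_le_mul_of_nonneg_left this hN.le
    _ = _ := by ring

lemma Pd_nonneg {N : ℕ} [NeZero N] (e : Grid N) (u : Grid N → ℝ) : 0 ≤ Pd e u := by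
  unfold Pd; positivity

lemma diff_sum_zero {N : ℕ} [NeZero N] (F : ZMod N → ℝ) : ∑ k, (F (k+1) - F k) = 0 := by
  rw [Finset.sum_sub_distrib, sum_shift, sub_self]

lemma poinc_x {N : ℕ} [NeZero N] (f : Grid N → ℝ) :
    8 * ∑ p, (f (p + ex) - f p)^2 ≤ (N:ℝ)^2 * Pd ex (fun p => f (p + ex) - f p) := by
  simp only [Pd, grid_sum, ex, Prod.mk_add_mk, add_zero, Finset.mul_sum]
  refine Finset.sum_le_sum fun z _ => ?_
  rw [Finset.sum_comm, Finset.sum_comm (f := fun x y => (N:ℝ)^2 * _)]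
  refine Finset.sum_le_sum fun y _ => ?_
  have := poinc_aux (fun x => f (x+1, y, z) - f (x, y, z)) (diff_sum_zero fun x => f (x, y, z))
  simpa only [Finset.mul_sum] using this

lemma poinc_y {N : ℕ} [NeZero N] (f : Grid N → ℝ) :
    8 * ∑ p, (f (p + ey) - f p)^2 ≤ (N:ℝ)^2 * Pd ey (fun p => f (p + ey) - f p) := by
  simp only [Pd, grid_sum, ey, Prod.mk_add_mk, add_zero, Finset.mul_sum]
  refine Finset.sum_le_sum fun z _ => Finset.sum_le_sum fun x _ => ?_
  have := poinc_aux (fun y => f (x, y+1, z) - f (x, y, z)) (diff_sum_zero fun y => f (x, y, z))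
  simpa only [Finset.mul_sum] using this

lemma poinc_z {N : ℕ} [NeZero N] (f : Grid N → ℝ) :
    8 * ∑ p, (f (p + ez) - f p)^2 ≤ (N:ℝ)^2 * Pd ez (fun p => f (p + ez) - f p) := by
  simp only [Pd, grid_sum, ez, Prod.mk_add_mk, add_zero, Finset.mul_sum]
  rw [Finset.sum_comm, Finset.sum_comm (f := fun z x => ∑ y, (N:ℝ)^2 * _)]
  refine Finset.sum_le_sum fun x _ => ?_
  rw [Finset.sum_comm, Finset.sum_comm (f := fun z y => (N:ℝ)^2 * _)]
  refine Finset.sum_le_sum fun y _ => ?_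
  have := poinc_aux (fun z => f (x, y, z+1) - f (x, y, z)) (diff_sum_zero fun z => f (x, y, z))
  simpa only [Finset.mul_sum] using this

/-- Undivided second difference. -/
def d2 {N : ℕ} (e : Grid N) (f : Grid N → ℝ) (p : Grid N) : ℝ := f (p+e) - 2 * f p + f (p-e)

lemma d2_mul {N : ℕ} [NeZero N] (f : Grid N → ℝ) (a b : Grid N) :
    ∑ p, d2 a f p * d2 b f p = Pd b (fun p => f (p + a) - f p) :=
  parts_aux f a b

lemma lap0 {N : ℕ} [NeZero N] (f : Grid N → ℝ) :
    ∑ p, (d2 ex f p + d2 ey f p + d2 ez f p)^2 =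
      (Pd ex (fun p => f (p + ex) - f p) + Pd ey (fun p => f (p + ex) - f p) + Pd ez (fun p => f (p + ex) - f p))
      + (Pd ey (fun p => f (p + ey) - f p) + Pd ex (fun p => f (p + ey) - f p) + Pd ez (fun p => f (p + ey) - f p))
      + (Pd ez (fun p => f (p + ez) - f p) + Pd ex (fun p => f (p + ez) - f p) + Pd ey (fun p => f (p + ez) - f p)) := by
  simp only [← d2_mul, ← Finset.sum_add_distrib]
  exact Finset.sum_congr rfl fun p _ => by ring

lemma grad4 {N : ℕ} [NeZero N] (f : Grid N → ℝ) :
    ∑ p, ((f (p + ex) - f p)^4 + (f (p + ey) - f p)^4 + (f (p + ez) - f p)^4) ≤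
      N / 4 * (∑ p, (d2 ex f p + d2 ey f p + d2 ez f p)^2)^2 := by
  have n := fun (e a : Grid N) => Pd_nonneg e (fun p => f (p + a) - f p)
  have s := fun (a : Grid N) => Finset.sum_nonneg (fun p (_ : p ∈ (Finset.univ : Finset (Grid N))) => sq_nonneg (f (p + a) - f p))
  have hx := L4_bound _ _ _ _ _ (n ex ex) (n ey ex) (n ez ex) (s ex) (poinc_x f)
    (L4_grid (fun p => f (p + ex) - f p))
  have hy := L4_bound _ _ _ _ _ (n ey ey) (n ex ey) (n ez ey) (s ey) (poinc_y f)
    ((L4_grid (fun p => f (p + ey) - f p)).trans_eq (by ring))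
  have hz := L4_bound _ _ _ _ _ (n ez ez) (n ex ez) (n ey ez) (s ez) (poinc_z f)
    ((L4_grid (fun p => f (p + ez) - f p)).trans_eq (by ring))
  rw [lap0, Finset.sum_add_distrib, Finset.sum_add_distrib]
  have aux : ∀ a b c : ℝ, 0 ≤ a → 0 ≤ b → 0 ≤ c → a^2+b^2+c^2 ≤ (a+b+c)^2 := by
    intro a b c ha hb hc
    nlinarith [mul_nonneg ha hb, mul_nonneg ha hc, mul_nonneg hb hc]
  have := aux _ _ _ (add_nonneg (add_nonneg (n ex ex) (n ey ex)) (n ez ex))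
    (add_nonneg (add_nonneg (n ey ey) (n ex ey)) (n ez ey))
    (add_nonneg (add_nonneg (n ez ez) (n ex ez)) (n ey ez))
  have hN : (0:ℝ) ≤ N / 4 := by positivity
  have := mul_le_mul_of_nonneg_left this hN
  linarith

lemma norm2_nonneg {N : ℕ} [NeZero N] (f : Grid N → ℝ) : 0 ≤ norm2 f := Real.sqrt_nonneg _

lemma norm2_sq {N : ℕ} [NeZero N] (f : Grid N → ℝ) :
    norm2 f ^ 2 = (1 / (N : ℝ) ^ 3) * ∑ p : Grid N, (f p) ^ 2 := by
  unfold norm2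
  exact Real.sq_sqrt (by positivity)

lemma norm2_add {N : ℕ} [NeZero N] (f g : Grid N → ℝ) :
    norm2 (fun p => f p + g p) ≤ norm2 f + norm2 g := by
  have h : ∀ f : Grid N → ℝ, norm2 f = √(1 / (N : ℝ) ^ 3) * ‖WithLp.toLp 2 f‖ := by
    intro f
    rw [norm2, Real.sqrt_mul (by positivity), EuclideanSpace.norm_eq]
    simp
  rw [h, h f, h g, ← mul_add]
  refine mul_le_mul_of_nonneg_left ?_ (Real.sqrt_nonneg _)
  exact norm_add_le (WithLp.toLp 2 f) (WithLp.toLp 2 g)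

lemma norm2_mul {N : ℕ} [NeZero N] (f g : Grid N → ℝ) :
    norm2 (fun p => f p * g p) ≤ normInf f * norm2 g := by
  have hf : ∀ p, |f p| ≤ normInf f := fun p =>
    le_ciSup (f := fun p => |f p|) (Set.finite_range _).bddAbove p
  have h0 : 0 ≤ normInf f := (abs_nonneg _).trans (hf 0)
  refine abs_le_of_sq_le_sq' ?_ (mul_nonneg h0 (norm2_nonneg _)) |>.2
  rw [mul_pow, norm2_sq, norm2_sq, mul_left_comm]
  refine mul_le_mul_of_nonneg_left ?_ (by positivity)
  rw [Finset.mul_sum]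
  refine Finset.sum_le_sum fun p _ => ?_
  rw [mul_pow]
  refine mul_le_mul_of_nonneg_right ?_ (sq_nonneg _)
  exact sq_le_sq' (neg_le_of_abs_le (hf p)) (le_of_abs_le (hf p))

lemma lap_eq {N : ℕ} (f : Grid N → ℝ) (p : Grid N) :
    lap f p = (N:ℝ)^2 * (d2 ex f p + d2 ey f p + d2 ez f p) := by
  obtain ⟨x, y, z⟩ := p
  simp only [lap, Dx2, Dy2, Dz2, d2, ex, ey, ez, Prod.mk_add_mk, Prod.mk_sub_mk, add_zero, sub_zero]
  ring

lemma norm2_lap_sq {N : ℕ} [NeZero N] (f : Grid N → ℝ) :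
    norm2 (lap f) ^ 2 = N * ∑ p, (d2 ex f p + d2 ey f p + d2 ez f p)^2 := by
  have hN : (N:ℝ) ≠ 0 := by exact_mod_cast NeZero.ne N
  rw [norm2_sq]
  simp only [lap_eq, mul_pow, ← Finset.mul_sum]
  field_simp

lemma pt_aux (a b c x y z : ℝ) :
    (a*x+b*y+c*z)^2 ≤ 3 * (√(a^4+b^4+c^4) * √(x^4+y^4+z^4)) := by
  have h1 : (a*x+b*y+c*z)^2 ≤ (a^2+b^2+c^2) * (x^2+y^2+z^2) := by
    nlinarith [sq_nonneg (a*y-b*x), sq_nonneg (a*z-c*x), sq_nonneg (b*z-c*y)]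
  have h2 : ∀ a b c : ℝ, a^2+b^2+c^2 ≤ √3 * √(a^4+b^4+c^4) := by
    intro a b c
    rw [← Real.sqrt_mul (by norm_num)]
    refine Real.le_sqrt_of_sq_le ?_
    nlinarith [sq_nonneg (a^2-b^2), sq_nonneg (a^2-c^2), sq_nonneg (b^2-c^2)]
  refine h1.trans ((mul_le_mul (h2 a b c) (h2 x y z) (by positivity) (by positivity)).trans_eq ?_)
  have := Real.mul_self_sqrt (show (0:ℝ) ≤ 3 by norm_num)
  calc _ = (√3 * √3) * (√(a^4+b^4+c^4) * √(x^4+y^4+z^4)) := by ring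
    _ = _ := by rw [this]

lemma T_aux {N : ℕ} [NeZero N] (f g a b c x y z : Grid N → ℝ)
    (hf : ∑ p, (a p^4 + b p^4 + c p^4) ≤ N / 4 * (∑ p, (d2 ex f p + d2 ey f p + d2 ez f p)^2)^2)
    (hg : ∑ p, (x p^4 + y p^4 + z p^4) ≤ N / 4 * (∑ p, (d2 ex g p + d2 ey g p + d2 ez g p)^2)^2) :
    norm2 (fun p => (N:ℝ)^2 * (a p * x p + b p * y p + c p * z p)) ≤
      √3 / 2 * (norm2 (lap f) * norm2 (lap g)) := by
  have hN : (0:ℝ) < N := by exact_mod_cast Nat.pos_of_ne_zero (NeZero.ne N)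
  have A0 := norm2_nonneg (lap f)
  have B0 := norm2_nonneg (lap g)
  refine abs_le_of_sq_le_sq' ?_ (by positivity) |>.2
  rw [norm2_sq, mul_pow, mul_pow, norm2_lap_sq, norm2_lap_sq, div_pow, Real.sq_sqrt (by norm_num)]
  set K := ∑ p, (d2 ex f p + d2 ey f p + d2 ez f p)^2 with hK
  set L := ∑ p, (d2 ex g p + d2 ey g p + d2 ez g p)^2 with hL
  have K0 : 0 ≤ K := by positivity
  have L0 : 0 ≤ L := by positivity
  have hs : ∑ p, (a p * x p + b p * y p + c p * z p)^2 ≤ 3 * (N/4 * K * L) := by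
    calc _ ≤ ∑ p, 3 * (√(a p^4+b p^4+c p^4) * √(x p^4+y p^4+z p^4)) :=
          Finset.sum_le_sum fun p _ => pt_aux _ _ _ _ _ _
      _ = 3 * ∑ p, (√(a p^4+b p^4+c p^4) * √(x p^4+y p^4+z p^4)) := by rw [Finset.mul_sum]
      _ ≤ 3 * (√(∑ p, (a p^4+b p^4+c p^4)) * √(∑ p, (x p^4+y p^4+z p^4))) := by
          refine mul_le_mul_of_nonneg_left (cs_aux _ _ ?_ ?_) (by norm_num)
          · intro p; positivity
          · intro p; positivity
      _ ≤ 3 * (√(N/4 * K^2) * √(N/4 * L^2)) := by gcongr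
      _ = _ := by
          rw [Real.sqrt_mul (by positivity), Real.sqrt_mul (by positivity), Real.sqrt_sq K0,
            Real.sqrt_sq L0]
          have := Real.mul_self_sqrt (show (0:ℝ) ≤ N/4 by positivity)
          calc _ = 3 * ((√((N:ℝ)/4) * √((N:ℝ)/4)) * K * L) := by ring
            _ = _ := by rw [this]
  simp only [mul_pow, ← Finset.mul_sum]
  calc _ = (N:ℝ) * ∑ p, (a p * x p + b p * y p + c p * z p)^2 := by field_simp
    _ ≤ N * (3 * (N/4 * K * L)) := mul_le_mul_of_nonneg_left hs hN.le
    _ = _ := by ring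

lemma grad4' {N : ℕ} [NeZero N] (f : Grid N → ℝ) :
    ∑ p, ((f p - f (p - ex))^4 + (f p - f (p - ey))^4 + (f p - f (p - ez))^4) ≤
      N / 4 * (∑ p, (d2 ex f p + d2 ey f p + d2 ez f p)^2)^2 := by
  refine le_of_eq_of_le ?_ (grad4 f)
  have h : ∀ e : Grid N, ∑ p, (f p - f (p - e))^4 = ∑ p, (f (p + e) - f p)^4 := by
    intro e
    rw [← Equiv.sum_comp (Equiv.addRight e) (fun p => (f p - f (p - e))^4)]
    simp
  simp only [Finset.sum_add_distrib, h]

lemma one_le_C {N : ℕ} [NeZero N] (C₀ : ℝ)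
    (hSob2 : ∀ f : Grid N → ℝ, normInf f ≤ C₀ * (norm2 f + norm2 (lap f))) : 1 ≤ C₀ := by
  have hN : (N:ℝ) ≠ 0 := by exact_mod_cast NeZero.ne N
  have h := hSob2 (fun _ => 1)
  have h1 : normInf (fun _ : Grid N => (1:ℝ)) = 1 := by simp [normInf]
  have h2 : norm2 (fun _ : Grid N => (1:ℝ)) = 1 := by
    have hc : (1 / (N : ℝ) ^ 3) * ∑ p : Grid N, (1:ℝ) ^ 2 = 1 := by
      simp only [one_pow, Finset.sum_const, Finset.card_univ, Fintype.card_prod, ZMod.card,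
        nsmul_eq_mul, Nat.cast_mul]
      field_simp
    rw [norm2, hc, Real.sqrt_one]
  have h3 : norm2 (lap (fun _ : Grid N => (1:ℝ))) = 0 := by
    have : ∀ p, lap (fun _ : Grid N => (1:ℝ)) p = 0 := by
      intro p; rw [lap_eq]; simp only [d2]; ring
    simp [norm2, this]
  rw [h1, h2, h3] at h
  linarith

theorem stmt_14 {N : ℕ} [NeZero N] (C₀ : ℝ)
    (hSob1 : ∀ f : Grid N → ℝ, gradNorm4 f ≤ C₀ * norm2 (lap f))
    (hSob2 : ∀ f : Grid N → ℝ, normInf f ≤ C₀ * (norm2 f + norm2 (lap f)))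
    (f g : Grid N → ℝ) :
    norm2 (lap (fun p => f p * g p)) ≤
      (Real.sqrt 3 + 2) * C₀ ^ 2 * (norm2 f + norm2 (lap f)) * (norm2 g + norm2 (lap g)) := by
  have hC := one_le_C C₀ hSob2
  have e : lap (fun p => f p * g p) = fun p => (f p * lap g p + g p * lap f p) +
      ((N:ℝ)^2 * ((f (p + ex) - f p) * (g (p + ex) - g p) + (f (p + ey) - f p) * (g (p + ey) - g p)
        + (f (p + ez) - f p) * (g (p + ez) - g p)) +
      (N:ℝ)^2 * ((f p - f (p - ex)) * (g p - g (p - ex)) + (f p - f (p - ey)) * (g p - g (p - ey))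
        + (f p - f (p - ez)) * (g p - g (p - ez)))) := by
    funext p
    simp only [lap_eq, d2]
    ring
  have t1 := T_aux f g _ _ _ _ _ _ (grad4 f) (grad4 g)
  have t2 := T_aux f g _ _ _ _ _ _ (grad4' f) (grad4' g)
  have t3 := norm2_mul f (lap g)
  have t4 := norm2_mul g (lap f)
  have A0 := norm2_nonneg (lap f)
  have B0 := norm2_nonneg (lap g)
  have a0 := norm2_nonneg f
  have b0 := norm2_nonneg g
  have t5 := mul_le_mul_of_nonneg_right (hSob2 f) B0
  have t6 := mul_le_mul_of_nonneg_right (hSob2 g) A0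
  have k2 := ((norm2_add _ _).trans (add_le_add (norm2_add _ _) (norm2_add _ _))).trans
    (add_le_add (add_le_add (t3.trans t5) (t4.trans t6)) (add_le_add t1 t2))
  rw [e]
  refine k2.trans ?_
  clear k2 t1 t2 t3 t4 t5 t6 e hSob1 hSob2
  generalize norm2 (lap f) = A at *
  generalize norm2 (lap g) = B at *
  generalize norm2 f = a at *
  generalize norm2 g = b at *
  have hC2 : C₀ ≤ C₀^2 := by nlinarith
  have hC3 : 1 ≤ C₀^2 := by nlinarith
  have f1 : C₀ * (a + A) * B ≤ C₀^2 * (a + A) * (b + B) := by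
    gcongr
    linarith
  have f2 : C₀ * (b + B) * A ≤ C₀^2 * (b + B) * (a + A) := by
    gcongr
    linarith
  have f3 : A * B ≤ C₀^2 * ((a + A) * (b + B)) := by
    have : A * B ≤ (a + A) * (b + B) := by gcongr <;> linarith
    have h0 : 0 ≤ (a + A) * (b + B) := by positivity
    nlinarith
  have f4 := mul_le_mul_of_nonneg_left f3 (Real.sqrt_nonneg 3)
  nlinarith
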